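/- Let D_X > 0, suppose some channel in ℛ_X(D_X;X) attains the minimal induced task distortion D_T^min = min 𝒟*_T(D_X;X), and suppose that for every channel k ∈ ℛ_X(D_X;X) with E[d_T(f(X), f(X̂))] = D_T^min there exist two points x̂₁ ≠ x̂₂ with nonzero marginal probabilities P(X̂ = x̂₁) > 0 and P(X̂ = x̂₂) > 0, identical task output f(x̂₁) = f(x̂₂), and at least one input x with P(X = x | X̂ = x̂₁) ≠ P(X = x | X̂ = x̂₂). Then the minimal achievable rate of the supervised approach is strictly lower than the input rate-distortion function: R_X(D_T^min;T) < R_X(D_X;X). -/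

import Mathlib

open scoped BigOperators

/-- Joint distribution P(a,b) = p(a)·k(a)(b) induced by a source `p` and a channel `k`,
as a real number. -/
noncomputable def jointP {A B : Type*} [Fintype A] [Fintype B] (p : PMF A) (k : A → PMF B)
    (a : A) (b : B) : ℝ :=
  (p a * k a b).toReal

/-- Marginal distribution of the second coordinate of the joint induced by `(p, k)`. -/
noncomputable def margSnd {A B : Type*} [Fintype A] [Fintype B] (p : PMF A) (k : A → PMF B)
    (b : B) : ℝ :=
  ∑ a, jointP p k a b

/-- Mutual information I(A;B) = ∑_{a,b} P(a,b)·log(P(a,b)/(P(a)·P(b))) of the joint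
induced by `(p, k)`; the convention 0·log 0 = 0 holds automatically in Lean. -/
noncomputable def mutualInfo {A B : Type*} [Fintype A] [Fintype B] (p : PMF A)
    (k : A → PMF B) : ℝ :=
  ∑ a, ∑ b, jointP p k a b * Real.log (jointP p k a b / ((p a).toReal * margSnd p k b))

/-- Expected distortion E[d(A,B)] under the joint induced by `(p, k)`. -/
noncomputable def expDist {A B : Type*} [Fintype A] [Fintype B] (p : PMF A) (k : A → PMF B)
    (d : A → B → ℝ) : ℝ :=
  ∑ a, ∑ b, jointP p k a b * d a b

/-- Rate-distortion function: infimum of mutual information over all channels `A → PMF B`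
meeting the expected-distortion constraint `≤ D`. -/
noncomputable def rate {A B : Type*} [Fintype A] [Fintype B] (p : PMF A) (d : A → B → ℝ)
    (D : ℝ) : ℝ :=
  sInf { r : ℝ | ∃ k : A → PMF B, expDist p k d ≤ D ∧ r = mutualInfo p k }

/-- Conditional probability P(A = a | B = b) under the joint induced by `(p, k)`. -/
noncomputable def condProb {A B : Type*} [Fintype A] [Fintype B] (p : PMF A) (k : A → PMF B)
    (a : A) (b : B) : ℝ :=
  jointP p k a b / margSnd p k b

/-- Strict two-term log-sum inequality. -/
theorem log_sum_two_lt {u v s t c : ℝ} (hu : 0 ≤ u) (hv : 0 ≤ v) (hs : 0 < s) (ht : 0 < t)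
    (hc : 0 < c) (hne : u / s ≠ v / t) :
    (u + v) * Real.log ((u + v) / (c * (s + t))) <
      u * Real.log (u / (c * s)) + v * Real.log (v / (c * t)) := by
  have hst : 0 < s + t := add_pos hs ht
  have hne' : u / (c * s) ≠ v / (c * t) := by
    intro H
    apply hne
    field_simp at H ⊢
    exact H
  have key := Real.strictConvexOn_mul_log.2
    (show u / (c * s) ∈ Set.Ici (0 : ℝ) from Set.mem_Ici.2 (by positivity))
    (show v / (c * t) ∈ Set.Ici (0 : ℝ) from Set.mem_Ici.2 (by positivity)) hne'
    (div_pos hs hst) (div_pos ht hst) (by field_simp)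
  have hmix : s / (s + t) * (u / (c * s)) + t / (s + t) * (v / (c * t)) =
      (u + v) / (c * (s + t)) := by
    field_simp
  simp only [smul_eq_mul] at key
  rw [hmix] at key
  have key' := mul_lt_mul_of_pos_left key (mul_pos hc hst)
  generalize Real.log (u / (c * s)) = l₁ at key' ⊢
  generalize Real.log (v / (c * t)) = l₂ at key' ⊢
  generalize Real.log ((u + v) / (c * (s + t))) = l at key' ⊢
  calc (u + v) * l = c * (s + t) * ((u + v) / (c * (s + t)) * l) := by field_simp
    _ < _ := key'
    _ = u * l₁ + v * l₂ := by field_simp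

/-- Two-term log-sum inequality. -/
theorem log_sum_two_le {u v s t c : ℝ} (hu : 0 ≤ u) (hv : 0 ≤ v) (hs : 0 < s) (ht : 0 < t)
    (hc : 0 < c) :
    (u + v) * Real.log ((u + v) / (c * (s + t))) ≤
      u * Real.log (u / (c * s)) + v * Real.log (v / (c * t)) := by
  by_cases hne : u / s = v / t
  · have hv' : v = u / s * t := by rw [hne]; field_simp
    have hst : 0 < s + t := add_pos hs ht
    have h₁ : (u + v) / (c * (s + t)) = u / (c * s) := by rw [hv']; field_simp
    have h₂ : v / (c * t) = u / (c * s) := by rw [hv']; field_simp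
    rw [h₁, h₂, add_mul]
  · exact (log_sum_two_lt hu hv hs ht hc hne).le

theorem PMF.toReal_apply_pos_of_ne_zero {A : Type*} (p : PMF A) {a : A} (ha : p a ≠ 0) :
    0 < (p a).toReal :=
  ENNReal.toReal_pos ha (p.apply_ne_top a)

theorem PMF.toReal_apply_le_one {A : Type*} (p : PMF A) (a : A) : (p a).toReal ≤ 1 :=
  ENNReal.toReal_le_of_le_ofReal zero_le_one (by simpa using p.coe_le_one a)

section Channel

variable {A B : Type*} [Fintype A] [Fintype B] (p : PMF A) (k : A → PMF B)

theorem jointP_nonneg (a : A) (b : B) : 0 ≤ jointP p k a b :=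
  ENNReal.toReal_nonneg

theorem jointP_eq_zero {a : A} (ha : p a = 0) (b : B) : jointP p k a b = 0 := by
  simp [jointP, ha]

theorem jointP_le_one (a : A) (b : B) : jointP p k a b ≤ 1 := by
  rw [jointP, ENNReal.toReal_mul]
  exact mul_le_one₀ (PMF.toReal_apply_le_one p a) ENNReal.toReal_nonneg
    (PMF.toReal_apply_le_one (k a) b)

theorem margSnd_nonneg (b : B) : 0 ≤ margSnd p k b :=
  Finset.sum_nonneg fun a _ => jointP_nonneg p k a b

theorem jointP_le_margSnd (a : A) (b : B) : jointP p k a b ≤ margSnd p k b :=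
  Finset.single_le_sum (f := fun a => jointP p k a b)
    (fun a _ => jointP_nonneg p k a b) (Finset.mem_univ a)

theorem margSnd_le_card (b : B) : margSnd p k b ≤ Fintype.card A := by
  calc margSnd p k b ≤ ∑ _a : A, (1 : ℝ) := Finset.sum_le_sum fun a _ => jointP_le_one p k a b
    _ = Fintype.card A := by simp

theorem neg_card_le_mutualInfo_term (a : A) (b : B) :
    -(Fintype.card A : ℝ) ≤
      jointP p k a b * Real.log (jointP p k a b / ((p a).toReal * margSnd p k b)) := by
  rcases (jointP_nonneg p k a b).eq_or_lt with h0 | hpos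
  · rw [← h0]; simp
  have ha : 0 < (p a).toReal :=
    PMF.toReal_apply_pos_of_ne_zero p fun h => hpos.ne' (jointP_eq_zero p k h b)
  have hb : 0 < margSnd p k b := hpos.trans_le (jointP_le_margSnd p k a b)
  have hlog := mul_le_mul_of_nonneg_left
    (Real.one_sub_inv_le_log_of_pos (div_pos hpos (mul_pos ha hb))) hpos.le
  have hexp : jointP p k a b * (1 - (jointP p k a b / ((p a).toReal * margSnd p k b))⁻¹) =
      jointP p k a b - (p a).toReal * margSnd p k b := by
    field_simp
  have hprod : (p a).toReal * margSnd p k b ≤ Fintype.card A :=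
    (mul_le_of_le_one_left hb.le (PMF.toReal_apply_le_one p a)).trans (margSnd_le_card p k b)
  linarith

theorem bddBelow_mutualInfo (d : A → B → ℝ) (D : ℝ) :
    BddBelow {r : ℝ | ∃ k : A → PMF B, expDist p k d ≤ D ∧ r = mutualInfo p k} := by
  refine ⟨∑ _a : A, ∑ _b : B, -(Fintype.card A : ℝ), ?_⟩
  rintro r ⟨k, -, rfl⟩
  exact Finset.sum_le_sum fun a _ => Finset.sum_le_sum fun b _ =>
    neg_card_le_mutualInfo_term p k a b

theorem rate_le_mutualInfo {d : A → B → ℝ} {D : ℝ} (hk : expDist p k d ≤ D) :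
    rate p d D ≤ mutualInfo p k :=
  csInf_le (bddBelow_mutualInfo p d D) ⟨k, hk, rfl⟩

variable {C : Type*} [Fintype C] [DecidableEq C]

theorem jointP_map (φ : B → C) (a : A) (c : C) :
    jointP p (fun a => (k a).map φ) a c = ∑ b, if c = φ b then jointP p k a b else 0 := by
  rw [jointP, PMF.map_apply, tsum_fintype, ENNReal.toReal_mul, ENNReal.toReal_sum, Finset.mul_sum]
  · refine Finset.sum_congr rfl fun b _ => ?_
    by_cases hb : c = φ b <;> simp [hb, jointP]
  · intro b _
    split_ifs
    · exact (k a).apply_ne_top b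
    · exact ENNReal.zero_ne_top

theorem expDist_map (φ : B → C) (d : A → C → ℝ) :
    expDist p (fun a => (k a).map φ) d = expDist p k fun a b => d a (φ b) := by
  refine Finset.sum_congr rfl fun a _ => ?_
  simp only [jointP_map, Finset.sum_mul]
  rw [Finset.sum_comm]
  simp [ite_mul]

end Channel

section Merge

variable {A B : Type*} [Fintype A] [Fintype B] [DecidableEq B] (p : PMF A) (k : A → PMF B)

/-- The channel that outputs `b₁` whenever `k` would output `b₂`. -/
noncomputable def mergeChannel (b₁ b₂ : B) (a : A) : PMF B :=
  (k a).map fun b => if b = b₂ then b₁ else b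

variable {b₁ b₂ : B}

theorem expDist_mergeChannel {d : A → B → ℝ} (hd : ∀ a, d a b₁ = d a b₂) :
    expDist p (mergeChannel k b₁ b₂) d = expDist p k d := by
  refine (expDist_map p k _ d).trans ?_
  congr 1
  ext a b
  split_ifs with hb
  · rw [hb, hd]
  · rfl

theorem jointP_mergeChannel_left (hb : b₁ ≠ b₂) (a : A) :
    jointP p (mergeChannel k b₁ b₂) a b₁ = jointP p k a b₁ + jointP p k a b₂ := by
  refine (jointP_map p k _ a b₁).trans ?_
  rw [← Finset.sum_pair (f := jointP p k a) hb, ← Finset.sum_filter]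
  congr 1
  ext b
  by_cases h : b = b₂ <;> simp [h, eq_comm (a := b₁)]

theorem jointP_mergeChannel_right (hb : b₁ ≠ b₂) (a : A) :
    jointP p (mergeChannel k b₁ b₂) a b₂ = 0 := by
  refine (jointP_map p k _ a b₂).trans (Finset.sum_eq_zero fun b _ => if_neg ?_)
  split_ifs with h
  · exact hb.symm
  · exact Ne.symm h

theorem jointP_mergeChannel_of_ne {b : B} (h₁ : b ≠ b₁) (h₂ : b ≠ b₂) (a : A) :
    jointP p (mergeChannel k b₁ b₂) a b = jointP p k a b := by
  refine (jointP_map p k _ a b).trans ?_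
  rw [Finset.sum_eq_single b]
  · simp [h₂]
  · intro c _ hc
    by_cases h : c = b₂
    · simp [h, h₁]
    · simp [h, hc.symm]
  · simp

theorem mutualInfo_mergeChannel_lt (hb : b₁ ≠ b₂) (h₁ : 0 < margSnd p k b₁)
    (h₂ : 0 < margSnd p k b₂) {x : A} (hx : condProb p k x b₁ ≠ condProb p k x b₂) :
    mutualInfo p (mergeChannel k b₁ b₂) < mutualInfo p k := by
  have hm₁ : margSnd p (mergeChannel k b₁ b₂) b₁ = margSnd p k b₁ + margSnd p k b₂ := by
    simp [margSnd, jointP_mergeChannel_left p k hb, Finset.sum_add_distrib]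
  have hm : ∀ b, b ≠ b₁ → b ≠ b₂ → margSnd p (mergeChannel k b₁ b₂) b = margSnd p k b :=
    fun b hb₁ hb₂ => Finset.sum_congr rfl fun a _ => jointP_mergeChannel_of_ne p k hb₁ hb₂ a
  have split : ∀ f : B → ℝ, ∑ b, f b = (f b₁ + f b₂) + ∑ b ∈ {b₁, b₂}ᶜ, f b := fun f => by
    rw [← Finset.sum_pair hb, Finset.sum_add_sum_compl]
  have hrest : ∀ a, ∑ b ∈ ({b₁, b₂} : Finset B)ᶜ, jointP p (mergeChannel k b₁ b₂) a b *
        Real.log (jointP p (mergeChannel k b₁ b₂) a b /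
          ((p a).toReal * margSnd p (mergeChannel k b₁ b₂) b)) =
      ∑ b ∈ ({b₁, b₂} : Finset B)ᶜ, jointP p k a b *
        Real.log (jointP p k a b / ((p a).toReal * margSnd p k b)) := fun a => by
    refine Finset.sum_congr rfl fun b hmem => ?_
    simp only [Finset.mem_compl, Finset.mem_insert, Finset.mem_singleton, not_or] at hmem
    rw [jointP_mergeChannel_of_ne p k hmem.1 hmem.2, hm b hmem.1 hmem.2]
  refine Finset.sum_lt_sum (fun a _ => ?_) ⟨x, Finset.mem_univ x, ?_⟩
  · rw [split, split, hrest, jointP_mergeChannel_left p k hb, jointP_mergeChannel_right p k hb,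
      hm₁, zero_mul, add_zero]
    gcongr
    by_cases ha : p a = 0
    · simp [jointP_eq_zero p k ha]
    · exact log_sum_two_le (jointP_nonneg p k a b₁) (jointP_nonneg p k a b₂) h₁ h₂
        (PMF.toReal_apply_pos_of_ne_zero p ha)
  · rw [split, split, hrest, jointP_mergeChannel_left p k hb, jointP_mergeChannel_right p k hb,
      hm₁, zero_mul, add_zero]
    gcongr
    have ha : p x ≠ 0 := fun ha => hx (by simp [condProb, jointP_eq_zero p k ha])
    exact log_sum_two_lt (jointP_nonneg p k x b₁) (jointP_nonneg p k x b₂) h₁ h₂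
      (PMF.toReal_apply_pos_of_ne_zero p ha) hx

end Merge

/-- If some X-optimal channel attains D_T^min = min 𝒟*_T(D_X;X), and every
X-optimal channel attaining D_T^min has two distinct reconstruction points of positive
marginal probability with identical task output but differing posteriors, then
R_X(D_T^min;T) < R_X(D_X;X). Here f = h ∘ g. -/
theorem supervised_lt_input_rd
    {𝒳 𝒴 𝒯 : Type*} [Fintype 𝒳] [Fintype 𝒴] [Fintype 𝒯]
    [Nonempty 𝒳] [Nonempty 𝒴] [Nonempty 𝒯]
    (pX : PMF 𝒳) (g : 𝒳 → 𝒴) (h : 𝒴 → 𝒯)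
    (dT : 𝒯 → 𝒯 → ℝ) (hdT : ∀ t t', 0 ≤ dT t t')
    (dX : 𝒳 → 𝒳 → ℝ) (hdX : ∀ x x', 0 ≤ dX x x')
    (DX : ℝ) (hDX : 0 < DX)
    (kstar : 𝒳 → PMF 𝒳)
    (hk_dist : expDist pX kstar dX ≤ DX)
    (hk_rate : mutualInfo pX kstar = rate pX dX DX)
    (DTmin : ℝ)
    (hattain : DTmin = expDist pX kstar (fun x xhat => dT (h (g x)) (h (g xhat))))
    (hmin : ∀ k : 𝒳 → PMF 𝒳, expDist pX k dX ≤ DX →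
      mutualInfo pX k = rate pX dX DX →
      DTmin ≤ expDist pX k (fun x xhat => dT (h (g x)) (h (g xhat))))
    (hmerge : ∀ k : 𝒳 → PMF 𝒳, expDist pX k dX ≤ DX →
      mutualInfo pX k = rate pX dX DX →
      expDist pX k (fun x xhat => dT (h (g x)) (h (g xhat))) = DTmin →
      ∃ xhat₁ xhat₂ : 𝒳, xhat₁ ≠ xhat₂ ∧
        0 < margSnd pX k xhat₁ ∧ 0 < margSnd pX k xhat₂ ∧
        h (g xhat₁) = h (g xhat₂) ∧
        ∃ x : 𝒳, condProb pX k x xhat₁ ≠ condProb pX k x xhat₂) :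
    rate pX (fun x xhat => dT (h (g x)) (h (g xhat))) DTmin < rate pX dX DX := by
  classical
  obtain ⟨x₁, x₂, hne, h₁, h₂, hf, x, hx⟩ := hmerge kstar hk_dist hk_rate hattain.symm
  rw [← hk_rate]
  refine (rate_le_mutualInfo pX (mergeChannel kstar x₁ x₂) ?_).trans_lt
    (mutualInfo_mergeChannel_lt pX kstar hne h₁ h₂ hx)
  rw [expDist_mergeChannel pX kstar fun a => by rw [hf], hattain]
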